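/- Let n ≥ 1, m > n, and let r, p : ℝ^n → [1,∞) be measurable exponents with r⁻ < ∞. Define ζ(τ) = 1/p⁻ for 0 < τ ≤ 1 and ζ(τ) = 1/p⁺ for τ > 1 (with 1/p⁺ = 0 if p⁺ = ∞), and define ϑ(τ) = (r⁻/r⁺)(1 − 1/r⁻) + ζ(τ)(1 − r⁻/r⁺) if either [0 < τ ≤ 1 and 1 − 1/r⁻ ≤ ζ(τ)] or [τ > 1 and 1 − 1/r⁻ > ζ(τ)], and ϑ(τ) = 1 − 1/r⁻ if either [0 < τ ≤ 1 and 1 − 1/r⁻ > ζ(τ)] or [τ > 1 and 1 − 1/r⁻ ≤ ζ(τ)]. Then there exists a constant C > 0 such that for every τ > 0 and every f ∈ L^{p(·)}(ℝ^n) ∩ L^1(ℝ^n), ‖η_{τ,m} * f‖_{L^{r(·)}(ℝ^n)} ≤ C τ^{−nϑ(τ)} ‖f‖_{L^{p(·)}(ℝ^n)∩L^1(ℝ^n)}. -/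

import Mathlib

open MeasureTheory Filter Real
open scoped ENNReal

noncomputable section

/-- Euclidean space `ℝⁿ`. -/
abbrev Esp (n : ℕ) := EuclideanSpace ℝ (Fin n)

/-- The variable exponent modular `ρ_{p(·)}(f) = ∫_{ℝⁿ} |f(x)|^{p(x)} dx`. -/
def vMod (n : ℕ) (p : Esp n → ℝ) (f : Esp n → ℝ) : ℝ≥0∞ :=
  ∫⁻ x, (ENNReal.ofReal |f x|) ^ (p x) ∂volume

/-- The Luxemburg norm `‖f‖_{L^{p(·)}} = inf {λ > 0 : ρ_{p(·)}(f/λ) ≤ 1}`. -/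
def luxNorm (n : ℕ) (p : Esp n → ℝ) (f : Esp n → ℝ) : ℝ :=
  sInf {lam : ℝ | 0 < lam ∧ vMod n p (fun x => f x / lam) ≤ 1}

/-- Membership in the variable exponent Lebesgue space `L^{p(·)}(ℝⁿ)`. -/
def MemVLp (n : ℕ) (p : Esp n → ℝ) (f : Esp n → ℝ) : Prop :=
  AEMeasurable f volume ∧ ∃ lam : ℝ, 0 < lam ∧ vMod n p (fun x => f x / lam) ≤ 1

/-- Global log-Hölder continuity of `1/p` with decay value `l` (representing `l = 1/p_∞`). -/
def IsLogHolder (n : ℕ) (p : Esp n → ℝ) (l : ℝ) : Prop :=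
  ∃ c : ℝ, 0 < c ∧
    (∀ x y : Esp n, |1 / p x - 1 / p y| ≤ c / Real.log (Real.exp 1 + 1 / ‖x - y‖)) ∧
    (∀ x : Esp n, |1 / p x - l| ≤ c / Real.log (Real.exp 1 + ‖x‖))

/-- The kernel `η_{t,m}(x) = t^{-n} (1 + |x|/t)^{-m}`. -/
def etaKer (n : ℕ) (t m : ℝ) (x : Esp n) : ℝ :=
  t ^ (-(n : ℝ)) * (1 + ‖x‖ / t) ^ (-m)

/-- Convolution `(u * v)(x) = ∫ u(x - y) v(y) dy`. -/
def convR (n : ℕ) (u v : Esp n → ℝ) (x : Esp n) : ℝ :=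
  ∫ y, u (x - y) * v y ∂volume

/-!
Put `T = τ ^ (-n)`, `a = r⁻`, `s = r⁻ / r⁺` and `B = T ^ (1 - 1 / a)`. The kernel `η_{τ,m}` is
bounded by `T` and its mass does not depend on `τ`, so for normalized `f` the function
`v = |η_{τ,m} * f|` has bounded integral and satisfies `v ≤ T`. Since `(v / B) ^ a ≤ v` whenever
`v ≤ T`, this settles the constant exponent `a`. An additional bound `v ≤ W` with `B ≤ W` yields
`(v / (B ^ s * W ^ (1 - s))) ^ r ≤ (v / B) ^ a` for all `a ≤ r ≤ a / s`, hence the estimate for the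
variable exponent. When `τ ≤ 1`, the modular bound on `f` gives `v ≲ T ^ (1 / p⁻)`, and `W` is the
larger of `B` and `T ^ (1 / p⁻)`. When `τ > 1`, already `v ≤ T ≤ B`, so `W = B` is admissible and
the decay exponent `1 - 1 / r⁻`, which is at least `ϑ(τ)`, is reached whatever `p⁺` is.
-/

section ScalarInequalities

lemma div_rpow_one_sub_one_div_rpow_le {T v a : ℝ} (hT : 0 < T) (hv : 0 ≤ v) (hvT : v ≤ T)
    (ha : 1 ≤ a) : (v / T ^ (1 - 1 / a)) ^ a ≤ v := by
  have ha0 : 0 < a := by linarith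
  have hexp : (1 - 1 / a) * a = a - 1 := by field_simp
  rw [div_rpow hv (by positivity), ← rpow_mul hT.le, hexp, div_le_iff₀ (by positivity)]
  calc v ^ a = v * v ^ (a - 1) := by
        rw [← rpow_one_add' hv (by simpa using ha0.ne'), add_sub_cancel]
    _ ≤ v * T ^ (a - 1) := by gcongr

lemma div_rpow_mul_rpow_one_sub_rpow_le {v B W s a r : ℝ} (hv : 0 ≤ v) (hvW : v ≤ W) (hB : 0 < B)
    (hBW : B ≤ W) (ha : 0 ≤ a) (har : a ≤ r) (hsr : s * r ≤ a) :
    (v / (B ^ s * W ^ (1 - s))) ^ r ≤ (v / B) ^ a := by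
  have hW : 0 < W := hB.trans_le hBW
  have hsplit : v / (B ^ s * W ^ (1 - s)) = v / W * (W / B) ^ s := by
    rw [rpow_sub hW, rpow_one, div_rpow hW.le hB.le]
    field_simp
  calc (v / (B ^ s * W ^ (1 - s))) ^ r = (v / W) ^ r * (W / B) ^ (s * r) := by
        rw [hsplit, mul_rpow (by positivity) (by positivity), ← rpow_mul (by positivity)]
    _ ≤ (v / W) ^ a * (W / B) ^ a := by
        refine mul_le_mul ?_ ?_ (by positivity) (by positivity)
        · exact rpow_le_rpow_of_exponent_ge' (by positivity) ((div_le_one hW).2 hvW) ha har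
        · exact rpow_le_rpow_of_exponent_le ((one_le_div hB).2 hBW) hsr
    _ = (v / B) ^ a := by
        rw [← mul_rpow (by positivity) (by positivity), div_mul_div_cancel₀ hW.ne']

lemma mul_le_mul_add_rpow {k s u : ℝ≥0∞} {p q : ℝ} (hks : k ≤ s ^ q) (hs : 1 ≤ s) (hq : 1 ≤ q)
    (hqp : q ≤ p) : k * u ≤ s * (k + u ^ p) := by
  rw [mul_add]
  rcases le_total u s with hus | hsu
  · exact le_add_right (by rw [mul_comm]; gcongr)
  · refine le_add_left ?_
    have rpow_eq (x : ℝ≥0∞) {y : ℝ} (hy : 1 ≤ y) : x ^ y = x ^ (y - 1) * x := by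
      simpa using ENNReal.rpow_add_of_nonneg (x := x) (y - 1) 1 (by linarith) zero_le_one
    calc k * u ≤ s ^ q * u := by gcongr
      _ = s * (s ^ (q - 1) * u) := by rw [rpow_eq s hq]; ring
      _ ≤ s * (u ^ (p - 1) * u) := by
          gcongr
          exact (ENNReal.rpow_le_rpow hsu (by linarith)).trans
            (ENNReal.rpow_le_rpow_of_exponent_le (hs.trans hsu) (by linarith))
      _ = s * u ^ p := by rw [rpow_eq u (hq.trans hqp)]

lemma rpow_neg_mul_ite_max_le {τ d A s y z : ℝ} (hd : 0 ≤ d) (hs : s ≤ 1) :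
    τ ^ (-d * (s * A + (1 - s) * if τ ≤ 1 then max A y else A)) ≤
      τ ^ (-d *
        (if (τ ≤ 1 ∧ A ≤ (if τ ≤ 1 then y else z)) ∨ (1 < τ ∧ (if τ ≤ 1 then y else z) < A) then
          s * A + (if τ ≤ 1 then y else z) * (1 - s)
        else A)) := by
  have hA : s * A + (1 - s) * A = A := by ring
  rcases le_or_gt τ 1 with h1 | h1
  · simp only [h1, if_true, true_and, h1.not_gt, false_and, or_false]
    split_ifs with hAy
    · rw [max_eq_right hAy, mul_comm y]
    · rw [max_eq_left (not_le.1 hAy).le, hA]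
  · simp only [h1, h1.not_ge, if_false, false_and, true_and, false_or, hA]
    split_ifs with hzA
    · refine rpow_le_rpow_of_exponent_le h1.le
        (mul_le_mul_of_nonpos_left ?_ (neg_nonpos.2 hd))
      nlinarith
    · rfl

end ScalarInequalities

section EssentialBounds

variable {α : Type*} [MeasurableSpace α] {μ : Measure α} {f : α → ℝ} {c : ℝ}

lemma isCoboundedUnder_ge_ae [NeZero μ] (f : α → ℝ) : IsCoboundedUnder (· ≥ ·) (ae μ) f := by
  suffices h : ∃ k : ℕ, ∃ᶠ x in ae μ, f x ≤ k from
    let ⟨_, hk⟩ := h; IsCoboundedUnder.of_frequently_le hk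
  by_contra! h
  have hlt : ∀ᵐ x ∂μ, ∀ k : ℕ, (k : ℝ) < f x :=
    ae_all_iff.2 fun k => by simpa [not_frequently] using h k
  obtain ⟨x, hx⟩ := hlt.exists
  obtain ⟨k, hk⟩ := exists_nat_gt (f x)
  exact (hx k).not_gt hk

lemma le_essInf_of_ae_const_le [NeZero μ] (hf : ∀ᵐ x ∂μ, c ≤ f x) : c ≤ essInf f μ :=
  le_essInf_of_ae_le c hf (isCoboundedUnder_ge_ae f)

lemma ae_essInf_le_of_ae_const_le (hf : ∀ᵐ x ∂μ, c ≤ f x) : ∀ᵐ x ∂μ, essInf f μ ≤ f x :=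
  ae_essInf_le ⟨c, by simpa using hf⟩

lemma essSup_eq_zero_of_not_isBoundedUnder (hf : ¬ IsBoundedUnder (· ≤ ·) (ae μ) f) :
    essSup f μ = 0 := by
  have hempty : {a | ∀ᵐ x ∂μ, f x ≤ a} = ∅ :=
    Set.eq_empty_of_forall_notMem fun a ha => hf ⟨a, by simpa using ha⟩
  rw [essSup, limsup_eq, hempty, Real.sInf_empty]

lemma ae_div_essSup_mul_le (hf : ∀ᵐ x ∂μ, 0 < f x) (hc : 0 ≤ c) :
    ∀ᵐ x ∂μ, c / essSup f μ * f x ≤ c := by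
  by_cases hbdd : IsBoundedUnder (· ≤ ·) (ae μ) f
  · filter_upwards [hf, ae_le_essSup hbdd] with x hx hxsup
    rw [div_mul_eq_mul_div, div_le_iff₀ (hx.trans_le hxsup)]
    gcongr
  · simp [essSup_eq_zero_of_not_isBoundedUnder hbdd, hc]

lemma essInf_div_essSup_le_one [NeZero μ] (hf : ∀ᵐ x ∂μ, 0 < f x) :
    essInf f μ / essSup f μ ≤ 1 := by
  have hnonneg : ∀ᵐ x ∂μ, 0 ≤ f x := hf.mono fun _ hx => hx.le
  obtain ⟨x, hx, hx_inf, hx_sup⟩ := (hf.and ((ae_essInf_le_of_ae_const_le hnonneg).and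
    (ae_div_essSup_mul_le hf (le_essInf_of_ae_const_le hnonneg)))).exists
  exact (mul_le_iff_le_one_left hx).1 (hx_sup.trans hx_inf)

end EssentialBounds

section Luxemburg

variable {n : ℕ} {p r f u : Esp n → ℝ}

lemma vMod_eq_lintegral_enorm (p f : Esp n → ℝ) : vMod n p f = ∫⁻ x, ‖f x‖ₑ ^ p x := by
  simp only [vMod, enorm_eq_ofReal_abs]

lemma vMod_one (f : Esp n → ℝ) : vMod n (fun _ => 1) f = ∫⁻ x, ‖f x‖ₑ := by
  simp only [vMod_eq_lintegral_enorm, ENNReal.rpow_one]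

lemma vMod_mono_abs {g : Esp n → ℝ} (hp : ∀ᵐ x, 0 ≤ p x) (hfg : ∀ x, |f x| ≤ |g x|) :
    vMod n p f ≤ vMod n p g := by
  refine lintegral_mono_ae ?_
  filter_upwards [hp] with x hx
  exact ENNReal.rpow_le_rpow (ENNReal.ofReal_le_ofReal (hfg x)) hx

lemma lintegral_enorm_div_le_one {c : ℝ} (hc : 0 < c) (hu : ∫⁻ x, ‖u x‖ₑ ≤ ENNReal.ofReal c) :
    ∫⁻ x, ‖u x / c‖ₑ ≤ 1 := by
  simp_rw [div_eq_mul_inv, enorm_mul]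
  rw [lintegral_mul_const' _ _ enorm_ne_top, enorm_of_nonneg (by positivity)]
  calc (∫⁻ x, ‖u x‖ₑ) * ENNReal.ofReal c⁻¹ ≤ ENNReal.ofReal c * ENNReal.ofReal c⁻¹ := by gcongr
    _ = 1 := by rw [← ENNReal.ofReal_mul hc.le, mul_inv_cancel₀ hc.ne', ENNReal.ofReal_one]

lemma luxNorm_nonneg (p f : Esp n → ℝ) : 0 ≤ luxNorm n p f :=
  Real.sInf_nonneg fun _ h => h.1.le

lemma luxNorm_le {l : ℝ} (hl : 0 < l) (h : vMod n p (fun x => f x / l) ≤ 1) : luxNorm n p f ≤ l :=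
  csInf_le ⟨0, fun _ h => h.1.le⟩ ⟨hl, h⟩

lemma vMod_div_le_one_of_luxNorm_lt {l : ℝ} (hp : ∀ᵐ x, 0 ≤ p x) (hf : MemVLp n p f)
    (hl : luxNorm n p f < l) : vMod n p (fun x => f x / l) ≤ 1 := by
  obtain ⟨a, ⟨ha0, ha⟩, hal⟩ := exists_lt_of_csInf_lt hf.2 hl
  refine (vMod_mono_abs hp fun x => ?_).trans ha
  rw [abs_div, abs_div, abs_of_pos ha0, abs_of_pos (ha0.trans hal)]
  gcongr

lemma luxNorm_le_mul_of_forall_gt {C N : ℝ} (hC : 0 < C) (hN : 0 ≤ N)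
    (h : ∀ l, N < l → vMod n p (fun x => f x / (C * l)) ≤ 1) : luxNorm n p f ≤ C * N := by
  rw [← div_le_iff₀' hC]
  refine le_of_forall_gt_imp_ge_of_dense fun l hl => (div_le_iff₀' hC).2 ?_
  exact luxNorm_le (mul_pos hC (hN.trans_lt hl)) (h l hl)

lemma vMod_div_le_one_of_lintegral_le_one {T W s a : ℝ} (hT : 0 < T) (ha : 1 ≤ a)
    (hTW : T ^ (1 - 1 / a) ≤ W) (har : ∀ᵐ x, a ≤ r x) (hsr : ∀ᵐ x, s * r x ≤ a)
    (huT : ∀ x, |u x| ≤ T) (huW : ∀ x, |u x| ≤ W) (hu : ∫⁻ x, ‖u x‖ₑ ≤ 1) :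
    vMod n r (fun x => u x / ((T ^ (1 - 1 / a)) ^ s * W ^ (1 - s))) ≤ 1 := by
  have hB : 0 < T ^ (1 - 1 / a) := by positivity
  have hD : 0 < (T ^ (1 - 1 / a)) ^ s * W ^ (1 - s) := by
    have := hB.trans_le hTW
    positivity
  refine le_trans (lintegral_mono_ae ?_) hu
  filter_upwards [har, hsr] with x hax hsx
  rw [abs_div, abs_of_pos hD, ENNReal.ofReal_rpow_of_nonneg (by positivity) (by linarith),
    enorm_eq_ofReal_abs]
  exact ENNReal.ofReal_le_ofReal <|
    (div_rpow_mul_rpow_one_sub_rpow_le (abs_nonneg _) (huW x) hB hTW (by linarith) hax hsx).trans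
      (div_rpow_one_sub_one_div_rpow_le hT (abs_nonneg _) (huT x) ha)

end Luxemburg

section Convolution

variable {n : ℕ} {k f p : Esp n → ℝ}

lemma convR_div (k f : Esp n → ℝ) (l : ℝ) (x : Esp n) :
    convR n k (fun y => f y / l) x = convR n k f x / l := by
  simp only [convR, ← integral_div, mul_div_assoc]

lemma enorm_convR_le (k f : Esp n → ℝ) (x : Esp n) :
    ‖convR n k f x‖ₑ ≤ ∫⁻ y, ‖k (x - y)‖ₑ * ‖f y‖ₑ := by
  simpa only [convR, enorm_mul] using enorm_integral_le_lintegral_enorm fun y => k (x - y) * f y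

lemma enorm_convR_le_mul_lintegral {T : ℝ≥0∞} (hT : T ≠ ⊤) (hk : ∀ x, ‖k x‖ₑ ≤ T) (x : Esp n) :
    ‖convR n k f x‖ₑ ≤ T * ∫⁻ y, ‖f y‖ₑ := by
  rw [← lintegral_const_mul' _ _ hT]
  exact (enorm_convR_le k f x).trans (lintegral_mono fun y => by gcongr; exact hk _)

lemma lintegral_enorm_convR_le (hk : Measurable k) (hf : AEMeasurable f) :
    ∫⁻ x, ‖convR n k f x‖ₑ ≤ (∫⁻ x, ‖k x‖ₑ) * ∫⁻ y, ‖f y‖ₑ := by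
  have hmeas : AEMeasurable (fun z : Esp n × Esp n => ‖k (z.1 - z.2)‖ₑ * ‖f z.2‖ₑ) :=
    AEMeasurable.mul (by fun_prop)
      (hf.enorm.comp_quasiMeasurePreserving Measure.quasiMeasurePreserving_snd)
  calc ∫⁻ x, ‖convR n k f x‖ₑ ≤ ∫⁻ x, ∫⁻ y, ‖k (x - y)‖ₑ * ‖f y‖ₑ :=
        lintegral_mono (enorm_convR_le k f)
    _ = ∫⁻ y, ∫⁻ x, ‖k (x - y)‖ₑ * ‖f y‖ₑ := lintegral_lintegral_swap hmeas
    _ = ∫⁻ y, (∫⁻ x, ‖k x‖ₑ) * ‖f y‖ₑ := by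
        refine lintegral_congr fun y => ?_
        rw [lintegral_mul_const' _ _ enorm_ne_top, lintegral_sub_right_eq_self (fun x => ‖k x‖ₑ)]
    _ = (∫⁻ x, ‖k x‖ₑ) * ∫⁻ y, ‖f y‖ₑ := lintegral_const_mul'' _ hf.enorm

lemma enorm_convR_le_mul_add_vMod {s : ℝ≥0∞} {q : ℝ} (hs : 1 ≤ s) (hs' : s ≠ ⊤) (hq : 1 ≤ q)
    (hqp : ∀ᵐ x, q ≤ p x) (hk : Measurable k) (hks : ∀ x, ‖k x‖ₑ ≤ s ^ q) (x : Esp n) :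
    ‖convR n k f x‖ₑ ≤ s * ((∫⁻ y, ‖k y‖ₑ) + vMod n p f) := by
  calc ‖convR n k f x‖ₑ ≤ ∫⁻ y, ‖k (x - y)‖ₑ * ‖f y‖ₑ := enorm_convR_le k f x
    _ ≤ ∫⁻ y, s * (‖k (x - y)‖ₑ + ‖f y‖ₑ ^ p y) := by
        refine lintegral_mono_ae ?_
        filter_upwards [hqp] with y hy using mul_le_mul_add_rpow (hks _) hs hq hy
    _ = s * ((∫⁻ y, ‖k y‖ₑ) + vMod n p f) := by
        rw [lintegral_const_mul' _ _ hs', lintegral_add_left (by fun_prop),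
          lintegral_sub_left_eq_self (fun y => ‖k y‖ₑ), vMod_eq_lintegral_enorm]

end Convolution

section EtaKernel

variable {n : ℕ} {τ m : ℝ}

lemma measurable_etaKer : Measurable (etaKer n τ m) := by
  unfold etaKer
  fun_prop

lemma etaKer_nonneg (hτ : 0 < τ) (x : Esp n) : 0 ≤ etaKer n τ m x := by
  unfold etaKer
  positivity

lemma enorm_etaKer_le (hτ : 0 < τ) (hm : 0 ≤ m) (x : Esp n) :
    ‖etaKer n τ m x‖ₑ ≤ ENNReal.ofReal (τ ^ (-(n : ℝ))) := by
  rw [enorm_of_nonneg (etaKer_nonneg hτ x)]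
  refine ENNReal.ofReal_le_ofReal (mul_le_of_le_one_right (by positivity) ?_)
  exact rpow_le_one_of_one_le_of_nonpos (le_add_of_nonneg_right (by positivity)) (by linarith)

lemma etaKer_eq_mul_etaKer_one (hτ : 0 < τ) (x : Esp n) :
    etaKer n τ m x = τ ^ (-(n : ℝ)) * etaKer n 1 m (τ⁻¹ • x) := by
  simp [etaKer, norm_smul, abs_of_pos hτ, div_eq_inv_mul]

lemma integrable_etaKer_one (hm : (n : ℝ) < m) : Integrable (etaKer n 1 m) := by
  have hfin : (Module.finrank ℝ (Esp n) : ℝ) < m := by simpa using hm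
  exact (integrable_one_add_norm (μ := volume) hfin).congr
    (.of_forall fun x => by simp [etaKer])

lemma integrable_etaKer (hτ : 0 < τ) (hm : (n : ℝ) < m) : Integrable (etaKer n τ m) := by
  rw [funext (etaKer_eq_mul_etaKer_one hτ)]
  exact ((integrable_etaKer_one hm).comp_smul (inv_ne_zero hτ.ne')).const_mul _

lemma integral_etaKer (hτ : 0 < τ) : ∫ x, etaKer n τ m x = ∫ x, etaKer n 1 m x := by
  simp_rw [etaKer_eq_mul_etaKer_one hτ]
  rw [integral_const_mul, Measure.integral_comp_inv_smul_of_nonneg volume (etaKer n 1 m) hτ.le,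
    finrank_euclideanSpace_fin, smul_eq_mul, rpow_neg hτ.le, rpow_natCast,
    inv_mul_cancel_left₀ (by positivity)]

lemma integral_etaKer_one_nonneg : 0 ≤ ∫ x, etaKer n 1 m x :=
  integral_nonneg (etaKer_nonneg one_pos)

lemma lintegral_enorm_etaKer (hτ : 0 < τ) (hm : (n : ℝ) < m) :
    ∫⁻ x, ‖etaKer n τ m x‖ₑ = ENNReal.ofReal (∫ x, etaKer n 1 m x) := by
  rw [← integral_etaKer hτ, ofReal_integral_eq_lintegral_ofReal (integrable_etaKer hτ hm)
    (Eventually.of_forall (etaKer_nonneg hτ))]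
  exact lintegral_congr fun x => enorm_of_nonneg (etaKer_nonneg hτ x)

end EtaKernel

section Smoothing

variable {n : ℕ} {τ m : ℝ} {f p r : Esp n → ℝ}

lemma abs_convR_etaKer_le (hτ : 0 < τ) (hm : 0 ≤ m) (hf : ∫⁻ y, ‖f y‖ₑ ≤ 1) (x : Esp n) :
    |convR n (etaKer n τ m) f x| ≤ τ ^ (-(n : ℝ)) := by
  rw [← ENNReal.ofReal_le_ofReal_iff (by positivity), ← enorm_eq_ofReal_abs]
  exact (enorm_convR_le_mul_lintegral ENNReal.ofReal_ne_top (enorm_etaKer_le hτ hm) x).trans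
    (mul_le_of_le_one_right' hf)

lemma abs_convR_etaKer_le_of_le_one {q : ℝ} (hτ : 0 < τ) (hτ1 : τ ≤ 1) (hm : (n : ℝ) < m)
    (hq : 1 ≤ q) (hqp : ∀ᵐ x, q ≤ p x) (hf : vMod n p f ≤ 1) (x : Esp n) :
    |convR n (etaKer n τ m) f x| ≤
      ((∫ x, etaKer n 1 m x) + 1) * (τ ^ (-(n : ℝ))) ^ (1 / q) := by
  have hm0 : 0 ≤ m := n.cast_nonneg.trans hm.le
  have hK := integral_etaKer_one_nonneg (n := n) (m := m)
  have hT : 1 ≤ τ ^ (-(n : ℝ)) := one_le_rpow_of_pos_of_le_one_of_nonpos hτ hτ1 (by simp)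
  set S := (τ ^ (-(n : ℝ))) ^ (1 / q)
  have hS : 1 ≤ ENNReal.ofReal S := ENNReal.one_le_ofReal.2 (one_le_rpow hT (by positivity))
  have hSq : ENNReal.ofReal S ^ q = ENNReal.ofReal (τ ^ (-(n : ℝ))) := by
    rw [ENNReal.ofReal_rpow_of_nonneg (by positivity) (by positivity), ← rpow_mul (by positivity),
      one_div_mul_cancel (by positivity), rpow_one]
  rw [← ENNReal.ofReal_le_ofReal_iff (by positivity), ← enorm_eq_ofReal_abs]
  calc ‖convR n (etaKer n τ m) f x‖ₑ
      ≤ ENNReal.ofReal S * ((∫⁻ y, ‖etaKer n τ m y‖ₑ) + vMod n p f) :=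
        enorm_convR_le_mul_add_vMod hS ENNReal.ofReal_ne_top hq hqp measurable_etaKer
          (fun y => hSq ▸ enorm_etaKer_le hτ hm0 y) x
    _ ≤ ENNReal.ofReal S * (ENNReal.ofReal (∫ x, etaKer n 1 m x) + 1) := by
        rw [lintegral_enorm_etaKer hτ hm]
        gcongr
    _ = ENNReal.ofReal (((∫ x, etaKer n 1 m x) + 1) * S) := by
        rw [← ENNReal.ofReal_one, ← ENNReal.ofReal_add hK zero_le_one,
          ← ENNReal.ofReal_mul (by positivity), mul_comm]

lemma abs_convR_etaKer_le_rpow_ite {q A : ℝ} (hτ : 0 < τ) (hm : (n : ℝ) < m) (hA : A ≤ 1)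
    (hq : 1 ≤ q) (hqp : ∀ᵐ x, q ≤ p x) (hf1 : ∫⁻ y, ‖f y‖ₑ ≤ 1) (hfp : vMod n p f ≤ 1)
    (x : Esp n) :
    |convR n (etaKer n τ m) f x| ≤ ((∫ x, etaKer n 1 m x) + 1) *
      (τ ^ (-(n : ℝ))) ^ (if τ ≤ 1 then max A (1 / q) else A) := by
  have hK := integral_etaKer_one_nonneg (n := n) (m := m)
  split_ifs with hτ1
  · refine (abs_convR_etaKer_le_of_le_one hτ hτ1 hm hq hqp hfp x).trans ?_
    gcongr
    · exact one_le_rpow_of_pos_of_le_one_of_nonpos hτ hτ1 (by simp)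
    · exact le_max_right _ _
  · have hT : τ ^ (-(n : ℝ)) ≤ 1 := rpow_le_one_of_one_le_of_nonpos (not_le.1 hτ1).le (by simp)
    calc |convR n (etaKer n τ m) f x| ≤ τ ^ (-(n : ℝ)) :=
          abs_convR_etaKer_le hτ (n.cast_nonneg.trans hm.le) hf1 x
      _ ≤ (τ ^ (-(n : ℝ))) ^ A := by
          simpa using rpow_le_rpow_of_exponent_ge (by positivity) hT hA
      _ ≤ ((∫ x, etaKer n 1 m x) + 1) * (τ ^ (-(n : ℝ))) ^ A :=
          le_mul_of_one_le_left (by positivity) (by linarith)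

lemma vMod_convR_etaKer_div_le_one {q a s : ℝ} (hτ : 0 < τ) (hm : (n : ℝ) < m) (ha : 1 ≤ a)
    (har : ∀ᵐ x, a ≤ r x) (hsr : ∀ᵐ x, s * r x ≤ a) (hq : 1 ≤ q) (hqp : ∀ᵐ x, q ≤ p x)
    (hf : AEMeasurable f) (hf1 : ∫⁻ y, ‖f y‖ₑ ≤ 1) (hfp : vMod n p f ≤ 1) :
    vMod n r (fun x => convR n (etaKer n τ m) f x / (((∫ x, etaKer n 1 m x) + 1) *
      τ ^ (-(n : ℝ) * (s * (1 - 1 / a) +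
        (1 - s) * if τ ≤ 1 then max (1 - 1 / a) (1 / q) else 1 - 1 / a)))) ≤ 1 := by
  have hK := integral_etaKer_one_nonneg (n := n) (m := m)
  have hbound := abs_convR_etaKer_le_rpow_ite hτ hm (sub_le_self 1 (by positivity : 0 ≤ 1 / a))
    hq hqp hf1 hfp
  set c := (∫ x, etaKer n 1 m x) + 1
  set w := if τ ≤ 1 then max (1 - 1 / a) (1 / q) else 1 - 1 / a with hw
  have hc1 : 1 ≤ c := by linarith
  have hc0 : 0 < c := by linarith
  have hTw : (τ ^ (-(n : ℝ))) ^ (1 - 1 / a) ≤ (τ ^ (-(n : ℝ))) ^ w := by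
    rw [hw]
    split_ifs with hτ1
    · exact rpow_le_rpow_of_exponent_le
        (one_le_rpow_of_pos_of_le_one_of_nonpos hτ hτ1 (by simp)) (le_max_left _ _)
    · rfl
  have hmass : ∫⁻ x, ‖convR n (etaKer n τ m) f x‖ₑ ≤ ENNReal.ofReal c := by
    refine (lintegral_enorm_convR_le measurable_etaKer hf).trans ?_
    rw [lintegral_enorm_etaKer hτ hm]
    exact (mul_le_of_le_one_right' hf1).trans (ENNReal.ofReal_le_ofReal (by linarith))
  have hdenom : ((τ ^ (-(n : ℝ))) ^ (1 - 1 / a)) ^ s * ((τ ^ (-(n : ℝ))) ^ w) ^ (1 - s) =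
      τ ^ (-(n : ℝ) * (s * (1 - 1 / a) + (1 - s) * w)) := by
    simp only [← rpow_mul hτ.le, ← rpow_add hτ]
    ring_nf
  simp_rw [← hdenom, ← div_div _ c]
  refine vMod_div_le_one_of_lintegral_le_one (by positivity) ha hTw har hsr (fun x => ?_)
    (fun x => ?_) (lintegral_enorm_div_le_one hc0 hmass) <;> rw [abs_div, abs_of_pos hc0]
  · exact (div_le_self (abs_nonneg _) hc1).trans
      (abs_convR_etaKer_le hτ (n.cast_nonneg.trans hm.le) hf1 x)
  · exact (div_le_iff₀' hc0).2 (hbound x)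

end Smoothing

theorem statement6_general (n : ℕ) (m : ℝ) (hm : (n : ℝ) < m) :
    ∃ C : ℝ, 0 < C ∧ ∀ r pexp : Esp n → ℝ, (∀ᵐ x, 1 ≤ r x) → (∀ᵐ x, 1 ≤ pexp x) →
      ∀ rm rp pm : ℝ, rm = essInf r volume → rp = essSup r volume → pm = essInf pexp volume →
      ∀ τ : ℝ, 0 < τ → ∀ f : Esp n → ℝ, MemVLp n pexp f → MemVLp n (fun _ => (1 : ℝ)) f →
      luxNorm n r (convR n (etaKer n τ m) f) ≤
        C * τ ^ (-(n : ℝ) * (rm / rp * (1 - 1 / rm) +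
          (1 - rm / rp) * if τ ≤ 1 then max (1 - 1 / rm) (1 / pm) else 1 - 1 / rm)) *
        max (luxNorm n pexp f) (luxNorm n (fun _ => (1 : ℝ)) f) := by
  have hK := integral_etaKer_one_nonneg (n := n) (m := m)
  refine ⟨(∫ x, etaKer n 1 m x) + 1, by positivity, ?_⟩
  rintro r p hr hp _ _ _ rfl rfl rfl τ hτ f hfp hf1
  have hrm := le_essInf_of_ae_const_le hr
  have hsr := ae_div_essSup_mul_le (hr.mono fun x hx => one_pos.trans_le hx)
    (zero_le_one.trans hrm)
  refine luxNorm_le_mul_of_forall_gt (by positivity)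
    ((luxNorm_nonneg p f).trans (le_max_left _ _)) fun l hl => ?_
  have hmod_p : vMod n p (fun x => f x / l) ≤ 1 := vMod_div_le_one_of_luxNorm_lt
    (hp.mono fun x hx => zero_le_one.trans hx) hfp ((le_max_left _ _).trans_lt hl)
  have hmod_one : ∫⁻ x, ‖f x / l‖ₑ ≤ 1 := vMod_one (n := n) _ ▸ vMod_div_le_one_of_luxNorm_lt
    (Eventually.of_forall fun _ => zero_le_one) hf1 ((le_max_right _ _).trans_lt hl)
  have hmod := vMod_convR_etaKer_div_le_one hτ hm hrm (ae_essInf_le_of_ae_const_le hr) hsr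
    (le_essInf_of_ae_const_le hp) (ae_essInf_le_of_ae_const_le hp) (hfp.1.div_const l)
    hmod_one hmod_p
  simpa only [convR_div, div_div, mul_comm l] using hmod

/-- Theorem 3.9(2) of the paper: `‖η_{τ,m} * f‖_{L^{r(·)}} ≤ C τ^{-nϑ(τ)} ‖f‖_{L^{p(·)} ∩ L^1}`.
Here `pp = essSup p` (with the convention `1/p⁺ = 0` when `p⁺ = ∞`, which matches Lean's
`essSup = 0` for essentially unbounded real-valued `p ≥ 1` together with `1/0 = 0`),
and similarly for `rp`. -/
theorem statement6 (n : ℕ) (hn : 1 ≤ n) (m : ℝ) (hm : (n : ℝ) < m)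
    (r pexp : Esp n → ℝ) (hrmeas : Measurable r) (hpmeas : Measurable pexp)
    (hr1 : ∀ x, 1 ≤ r x) (hp1 : ∀ x, 1 ≤ pexp x)
    (rm rp pm pp : ℝ)
    (hrm : rm = essInf r volume) (hrp : rp = essSup r volume)
    (hpm : pm = essInf pexp volume) (hpp : pp = essSup pexp volume) :
    ∃ C : ℝ, 0 < C ∧ ∀ τ : ℝ, 0 < τ → ∀ f : Esp n → ℝ,
      MemVLp n pexp f → MemVLp n (fun _ => (1 : ℝ)) f →
      luxNorm n r (convR n (etaKer n τ m) f) ≤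
        C * τ ^ (-(n : ℝ) *
          (if (τ ≤ 1 ∧ 1 - 1 / rm ≤ (if τ ≤ 1 then 1 / pm else 1 / pp)) ∨
              (1 < τ ∧ (if τ ≤ 1 then 1 / pm else 1 / pp) < 1 - 1 / rm) then
            (rm / rp) * (1 - 1 / rm) +
              (if τ ≤ 1 then 1 / pm else 1 / pp) * (1 - rm / rp)
          else 1 - 1 / rm)) *
        max (luxNorm n pexp f) (luxNorm n (fun _ => (1 : ℝ)) f) := by
  obtain ⟨C, hC, hgeneral⟩ := statement6_general n m hm
  refine ⟨C, hC, fun τ hτ f hfp hf1 => (hgeneral r pexp (.of_forall hr1) (.of_forall hp1)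
    rm rp pm hrm hrp hpm τ hτ f hfp hf1).trans ?_⟩
  gcongr ?_ * ?_ * _
  · exact (luxNorm_nonneg pexp f).trans (le_max_left _ _)
  · exact rpow_neg_mul_ite_max_le n.cast_nonneg
      (hrm ▸ hrp ▸ essInf_div_essSup_le_one (.of_forall fun x => one_pos.trans_le (hr1 x)))
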